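/- arXiv:2301.01400 — 2 statements merged into one kernel-verified Lean document; each statement's English description precedes it below -/
import Mathlib

section
/- Let γ > 0, L > 0, S > 0, ρ > 0 and let D, m ≥ 1 be integers. Let ℓ_1, …, ℓ_m : ℝ^D → ℝ be twice continuously differentiable functions such that each gradient ∇ℓ_k is S-Lipschitz and each Hessian ∇²ℓ_k is ρ-Lipschitz (with respect to the operator norm on matrices). Let g : ℝ^D → ℝ be differentiable with ‖∇g(x)‖ ≤ L for every x and with ∇g S-Lipschitz. Define the inner-loop map φ(x) = x − (γ/m) Σ_{k=1}^{m} ∇ℓ_k(x) and the validation loss F(x) = g(φ(x)). Then ∇F is S̃-Lipschitz with S̃ = S(1 + γS)² + γρL, i.e. ‖∇F(x̄) − ∇F(x̃)‖ ≤ (S(1 + γS)² + γρL)‖x̄ − x̃‖ for all x̄, x̃ ∈ ℝ^D. -/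
/-!
By the chain rule `D(g ∘ φ) = (Dg ∘ φ) · Dφ` is a product of two bounded Lipschitz maps. Let `K`
and `R` be Lipschitz constants of `φ` and `Dφ`. Then `Dg ∘ φ` is bounded by `L` and
`SK`-Lipschitz, while `Dφ` is bounded by `K` and `R`-Lipschitz, so the product is
`(SK² + LR)`-Lipschitz. For the inner-loop step, `K = 1 + γS` and `R = γρ`. The gradient inherits
the bound because it is the Riesz dual of the derivative.
-/

open scoped NNReal

section Lipschitz

variable {α ι 𝕜 E F G : Type*} [NontriviallyNormedField 𝕜]
  [NormedAddCommGroup E] [NormedSpace 𝕜 E] [NormedAddCommGroup F] [NormedSpace 𝕜 F]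
  [NormedAddCommGroup G] [NormedSpace 𝕜 G]

theorem lipschitzWith_sum_smul [PseudoEMetricSpace α] (s : Finset ι) (w : ι → 𝕜) {C : ι → ℝ≥0}
    {f : ι → α → E} (hf : ∀ i ∈ s, LipschitzWith (C i) (f i)) :
    LipschitzWith (∑ i ∈ s, ‖w i‖₊ * C i) fun x => ∑ i ∈ s, w i • f i x := by
  classical
  induction s using Finset.induction_on with
  | empty => simpa only [Finset.sum_empty] using LipschitzWith.const 0
  | insert i s hi ih =>
    simp only [Finset.sum_insert hi]
    exact ((lipschitzWith_smul (w i)).comp (hf i (s.mem_insert_self i))).add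
      (ih fun j hj => hf j (Finset.mem_insert_of_mem hj))

theorem lipschitzWith_clm_comp [PseudoMetricSpace α] {A : α → F →L[𝕜] G} {B : α → E →L[𝕜] F}
    {a b K R : ℝ≥0} (hA : LipschitzWith K A) (hB : LipschitzWith R B)
    (hA_le : ∀ x, ‖A x‖ ≤ a) (hB_le : ∀ x, ‖B x‖ ≤ b) :
    LipschitzWith (K * b + a * R) fun x => (A x).comp (B x) := by
  refine .of_dist_le_mul fun x y => ?_
  have hsplit : (A x).comp (B x) - (A y).comp (B y)
      = (A x - A y).comp (B x) + (A y).comp (B x - B y) := by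
    rw [ContinuousLinearMap.sub_comp, ContinuousLinearMap.comp_sub, sub_add_sub_cancel]
  calc dist ((A x).comp (B x)) ((A y).comp (B y))
      = ‖(A x - A y).comp (B x) + (A y).comp (B x - B y)‖ := by rw [dist_eq_norm, hsplit]
    _ ≤ ‖A x - A y‖ * ‖B x‖ + ‖A y‖ * ‖B x - B y‖ :=
        norm_add_le_of_le (ContinuousLinearMap.opNorm_comp_le _ _)
          (ContinuousLinearMap.opNorm_comp_le _ _)
    _ ≤ (K * dist x y) * b + a * (R * dist x y) := by
        rw [← dist_eq_norm, ← dist_eq_norm]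
        gcongr
        exacts [hA.dist_le_mul x y, hB_le x, hA_le y, hB.dist_le_mul x y]
    _ = ↑(K * b + a * R) * dist x y := by push_cast; ring

theorem lipschitzWith_fderiv_comp {g : F → G} {φ : E → F} {L S K R : ℝ≥0}
    (hg : Differentiable 𝕜 g) (hg_le : ∀ x, ‖fderiv 𝕜 g x‖ ≤ L)
    (hg' : LipschitzWith S (fderiv 𝕜 g)) (hφ : Differentiable 𝕜 φ)
    (hφ_lip : LipschitzWith K φ) (hφ' : LipschitzWith R (fderiv 𝕜 φ)) :
    LipschitzWith (S * K ^ 2 + L * R) (fderiv 𝕜 (g ∘ φ)) := by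
  have hchain : fderiv 𝕜 (g ∘ φ) = fun x => (fderiv 𝕜 g (φ x)).comp (fderiv 𝕜 φ x) :=
    funext fun x => fderiv_comp x (hg _) (hφ x)
  rw [hchain, sq, ← mul_assoc]
  exact lipschitzWith_clm_comp (hg'.comp hφ_lip) hφ' (fun x => hg_le (φ x))
    fun _ => norm_fderiv_le_of_lipschitz 𝕜 hφ_lip

theorem lipschitzWith_fderiv_comp_id_sub {g : E → G} {v : E → E} {L S K R : ℝ≥0}
    (hg : Differentiable 𝕜 g) (hg_le : ∀ x, ‖fderiv 𝕜 g x‖ ≤ L)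
    (hg' : LipschitzWith S (fderiv 𝕜 g)) (hv : Differentiable 𝕜 v)
    (hv_lip : LipschitzWith K v) (hv' : LipschitzWith R (fderiv 𝕜 v)) :
    LipschitzWith (S * (1 + K) ^ 2 + L * R) (fderiv 𝕜 fun x => g (x - v x)) := by
  have hφ' : LipschitzWith R (fderiv 𝕜 fun x => x - v x) := by
    have hderiv : (fderiv 𝕜 fun x => x - v x) =
        fun x => ContinuousLinearMap.id 𝕜 E - fderiv 𝕜 v x := funext fun x => by
      rw [fderiv_fun_sub differentiableAt_fun_id (hv x), fderiv_fun_id]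
    simpa only [hderiv, zero_add] using
      (LipschitzWith.const (ContinuousLinearMap.id 𝕜 E)).sub hv'
  exact lipschitzWith_fderiv_comp hg hg_le hg' (differentiable_id.sub hv)
    (LipschitzWith.id.sub hv_lip) hφ'

theorem lipschitzWith_fderiv_sum_smul (s : Finset ι) (w : ι → 𝕜) {C : ι → ℝ≥0} {f : ι → E → F}
    (hf : ∀ i ∈ s, Differentiable 𝕜 (f i)) (hf' : ∀ i ∈ s, LipschitzWith (C i) (fderiv 𝕜 (f i))) :
    LipschitzWith (∑ i ∈ s, ‖w i‖₊ * C i) (fderiv 𝕜 fun x => ∑ i ∈ s, w i • f i x) := by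
  have hderiv : (fderiv 𝕜 fun x => ∑ i ∈ s, w i • f i x) =
      fun x => ∑ i ∈ s, w i • fderiv 𝕜 (f i) x := funext fun x => by
    rw [fderiv_fun_sum fun i hi => (hf i hi x).fun_const_smul (w i)]
    exact Finset.sum_congr rfl fun i hi => fderiv_fun_const_smul (hf i hi x) (w i)
  rw [hderiv]
  exact lipschitzWith_sum_smul s w hf'

end Lipschitz

section Gradient

variable {𝕜 H : Type*} [RCLike 𝕜] [NormedAddCommGroup H]

theorem norm_gradient [InnerProductSpace 𝕜 H] [CompleteSpace H] (f : H → 𝕜) (x : H) :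
    ‖gradient f x‖ = ‖fderiv 𝕜 f x‖ :=
  LinearIsometryEquiv.norm_map _ _

theorem lipschitzWith_gradient_iff [InnerProductSpace 𝕜 H] [CompleteSpace H] {f : H → 𝕜}
    {C : ℝ≥0} : LipschitzWith C (gradient f) ↔ LipschitzWith C (fderiv 𝕜 f) :=
  (InnerProductSpace.toDual 𝕜 H).symm.isometry.lipschitzWith_iff C

theorem differentiable_gradient [InnerProductSpace ℝ H] [CompleteSpace H] {f : H → ℝ}
    (hf : ContDiff ℝ 2 f) : Differentiable ℝ (gradient f) :=
  (InnerProductSpace.toDual ℝ H).symm.differentiable.comp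
    ((hf.fderiv_right (m := 1) (by norm_num)).differentiable one_ne_zero)

end Gradient

theorem maml_validation_loss_smooth_general {ι H : Type*} [Fintype ι] [NormedAddCommGroup H]
    [InnerProductSpace ℝ H] [CompleteSpace H] (w : ι → ℝ) {L T : ℝ≥0} {S ρ : ι → ℝ≥0}
    {ℓ : ι → H → ℝ} (hC2 : ∀ k, ContDiff ℝ 2 (ℓ k))
    (hgradLip : ∀ k, LipschitzWith (S k) (gradient (ℓ k)))
    (hHessLip : ∀ k, LipschitzWith (ρ k) (fderiv ℝ (gradient (ℓ k))))
    {g : H → ℝ} (hg : Differentiable ℝ g) (hgbdd : ∀ x, ‖gradient g x‖ ≤ L)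
    (hglip : LipschitzWith T (gradient g)) :
    LipschitzWith (T * (1 + ∑ k, ‖w k‖₊ * S k) ^ 2 + L * ∑ k, ‖w k‖₊ * ρ k)
      (gradient fun x => g (x - ∑ k, w k • gradient (ℓ k) x)) := by
  have hℓ (k : ι) : Differentiable ℝ (gradient (ℓ k)) := differentiable_gradient (hC2 k)
  rw [lipschitzWith_gradient_iff] at hglip ⊢
  exact lipschitzWith_fderiv_comp_id_sub hg (fun x => norm_gradient g x ▸ hgbdd x) hglip
    (.fun_sum fun k _ => (hℓ k).fun_const_smul (w k))
    (lipschitzWith_sum_smul _ w fun k _ => hgradLip k)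
    (lipschitzWith_fderiv_sum_smul _ w (fun k _ => hℓ k) fun k _ => hHessLip k)

/-- Smoothness of the MAML validation loss: the gradient of `F = g ∘ φ`, where
`φ` is one inner-loop gradient step, is `S(1+γS)² + γρL`-Lipschitz. -/
theorem maml_validation_loss_smooth
    {D m : ℕ} (hD : 1 ≤ D) (hm : 1 ≤ m)
    {γ L S ρ : ℝ} (hγ : 0 < γ) (hL : 0 < L) (hS : 0 < S) (hρ : 0 < ρ)
    (ℓ : Fin m → EuclideanSpace ℝ (Fin D) → ℝ)
    (hC2 : ∀ k, ContDiff ℝ 2 (ℓ k))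
    (hgradLip : ∀ (k : Fin m) (x y : EuclideanSpace ℝ (Fin D)),
      ‖gradient (ℓ k) x - gradient (ℓ k) y‖ ≤ S * ‖x - y‖)
    (hHessLip : ∀ (k : Fin m) (x y : EuclideanSpace ℝ (Fin D)),
      ‖fderiv ℝ (fun z => gradient (ℓ k) z) x - fderiv ℝ (fun z => gradient (ℓ k) z) y‖
        ≤ ρ * ‖x - y‖)
    (g : EuclideanSpace ℝ (Fin D) → ℝ)
    (hg : Differentiable ℝ g)
    (hgbdd : ∀ x, ‖gradient g x‖ ≤ L)
    (hglip : ∀ x y : EuclideanSpace ℝ (Fin D),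
      ‖gradient g x - gradient g y‖ ≤ S * ‖x - y‖) :
    ∀ x y : EuclideanSpace ℝ (Fin D),
      ‖gradient (fun z => g (z - (γ / m) • ∑ k, gradient (ℓ k) z)) x
          - gradient (fun z => g (z - (γ / m) • ∑ k, gradient (ℓ k) z)) y‖
        ≤ (S * (1 + γ * S) ^ 2 + γ * ρ * L) * ‖x - y‖ := by
  lift γ to ℝ≥0 using hγ.le
  lift L to ℝ≥0 using hL.le
  lift S to ℝ≥0 using hS.le
  lift ρ to ℝ≥0 using hρ.le
  simp only [← lipschitzWith_iff_norm_sub_le] at hgradLip hHessLip hglip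
  have hsum (C : ℝ≥0) : ∑ _k : Fin m, ‖(γ / m : ℝ)‖₊ * C = γ * C := by
    have hm' : (m : ℝ≥0) ≠ 0 := by positivity
    simp [field]
  have hF := maml_validation_loss_smooth_general (fun _ => (γ / m : ℝ)) hC2 hgradLip hHessLip
    hg hgbdd hglip
  simp only [hsum, ← Finset.smul_sum] at hF
  exact fun x y => (hF.norm_sub_le x y).trans_eq (by push_cast; ring)
end

section
/- Let (T, dist) be a metric space, let a : T → T, let c : T → ℝ, and let D ⊆ T be a set of 'desirable' points. Suppose: (i) c is bounded from below on T; and (ii) for every z ∈ T with z ∉ D there exist ε(z) > 0 and δ(z) < 0 such that c(a(z')) − c(z') ≤ δ(z) for all z' with dist(z', z) ≤ ε(z). Let (z_i)_{i≥0} be the sequence defined by z_{i+1} = a(z_i) from an arbitrary z_0 ∈ T, and assume c(z_{i+1}) < c(z_i) for all i (the algorithm never terminates). Then every accumulation point of the sequence (z_i) belongs to D. -/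
/-!
Near a non-desirable accumulation point one step of the algorithm lowers `c` by at least a fixed
amount. The iterates visit such a neighbourhood infinitely often and `c` never increases in
between, so by the Archimedean property `c` is unbounded below along the iterates.
-/

open Filter Topology

theorem exists_le_add_nsmul_of_frequently_sub_le {R : Type*} [AddCommGroup R] [Preorder R]
    [IsOrderedAddMonoid R] {u : ℕ → R} {δ : R} (hu : Antitone u)
    (hδ : ∃ᶠ n in atTop, u (n + 1) - u n ≤ δ) (k : ℕ) : ∃ n, u n ≤ u 0 + k • δ := by
  induction k with
  | zero => exact ⟨0, by simp⟩
  | succ k ih =>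
    obtain ⟨m, hm⟩ := ih
    obtain ⟨n, hmn, hn⟩ := frequently_atTop.mp hδ m
    refine ⟨n + 1, ?_⟩
    calc
      u (n + 1) ≤ δ + u n := sub_le_iff_le_add.mp hn
      _ ≤ δ + (u 0 + k • δ) := by gcongr; exact (hu hmn).trans hm
      _ = u 0 + (k + 1) • δ := by rw [succ_nsmul]; abel

section

variable {R : Type*} [AddCommGroup R] [LinearOrder R] [IsOrderedAddMonoid R] [Archimedean R]

theorem not_bddBelow_range_of_frequently_sub_le {u : ℕ → R} {δ : R} (hu : Antitone u) (hδ : δ < 0)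
    (hdrop : ∃ᶠ n in atTop, u (n + 1) - u n ≤ δ) : ¬BddBelow (Set.range u) := by
  rintro ⟨b, hb⟩
  obtain ⟨k, hk⟩ := exists_lt_nsmul (neg_pos.mpr hδ) (u 0 - b)
  obtain ⟨n, hn⟩ := exists_le_add_nsmul_of_frequently_sub_le hu hdrop k
  have hlt : u 0 + k • δ < b := by
    rwa [smul_neg, lt_neg, neg_sub, lt_sub_iff_add_lt'] at hk
  exact (hn.trans_lt hlt).not_ge (hb ⟨n, rfl⟩)

theorem algorithm_model_convergence_general {T : Type*} [TopologicalSpace T]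
    (a : T → T) (c : T → R) (D : Set T)
    (hdec : ∀ x ∉ D, ∃ δ < 0, ∀ᶠ y in 𝓝 x, c (a y) - c y ≤ δ)
    (z : ℕ → T) (hz : ∀ i, z (i + 1) = a (z i))
    (hbdd : BddBelow (Set.range (c ∘ z))) (hanti : Antitone (c ∘ z))
    (zs : T) (hzs : MapClusterPt zs atTop z) : zs ∈ D := by
  by_contra hD
  obtain ⟨δ, hδ, hnear⟩ := hdec zs hD
  have hdrop : ∃ᶠ i in atTop, (c ∘ z) (i + 1) - (c ∘ z) i ≤ δ := by
    simpa only [Function.comp_apply, hz] using hzs.frequently hnear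
  exact not_bddBelow_range_of_frequently_sub_le hanti hδ hdrop hbdd

end

/-- Polak's algorithm-model convergence theorem: if the stopping-criterion
function `c` is bounded below and the algorithm map `a` uniformly decreases `c`
near every non-desirable point, then every accumulation point of the iterate
sequence is desirable. -/
theorem algorithm_model_convergence
    {T : Type*} [MetricSpace T]
    (a : T → T) (c : T → ℝ) (D : Set T)
    (hbdd : BddBelow (Set.range c))
    (hdec : ∀ z ∉ D, ∃ ε > (0 : ℝ), ∃ δ < (0 : ℝ),
      ∀ z', dist z' z ≤ ε → c (a z') - c z' ≤ δ)
    (z : ℕ → T) (hz : ∀ i, z (i + 1) = a (z i))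
    (hmono : ∀ i, c (z (i + 1)) < c (z i)) :
    ∀ zs : T,
      (∃ φ : ℕ → ℕ, StrictMono φ ∧
        Filter.Tendsto (fun n => z (φ n)) Filter.atTop (nhds zs)) →
      zs ∈ D := by
  rintro zs ⟨φ, hφ, hlim⟩
  refine algorithm_model_convergence_general a c D (fun x hx ↦ ?_) z hz
    (hbdd.mono (Set.range_comp_subset_range z c)) (antitone_nat_of_succ_le fun i ↦ (hmono i).le)
    zs (hlim.mapClusterPt.of_comp hφ.tendsto_atTop)
  obtain ⟨ε, hε, δ, hδ, hball⟩ := hdec x hx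
  exact ⟨δ, hδ, mem_of_superset (Metric.closedBall_mem_nhds x hε) hball⟩
end
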